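/- Let Γ = (V,E) be a finite simplicial graph with an edge labeling ψ : E → {2,3,4,...}. If Γ is a cycle of length greater than 3, then the Coxeter group C(Γ) is coherent. -/

import Mathlib

def Group.Slender (G : Type*) [Group G] : Prop := ∀ H : Subgroup G, H.FG

def Group.FinitelyPresented (G : Type*) [Group G] : Prop :=
  ∃ (n : ℕ) (rels : Set (FreeGroup (Fin n))), rels.Finite ∧ Nonempty (PresentedGroup rels ≃* G)

def Group.Coherent (G : Type*) [Group G] : Prop :=
  ∀ H : Subgroup G, H.FG → Group.FinitelyPresented H

def SimpleGraph.NoInducedCycleGT3 {V : Type*} (Γ : SimpleGraph V) : Prop :=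
  ∀ n : ℕ, 4 ≤ n → IsEmpty (SimpleGraph.cycleGraph n ↪g Γ)

/-- The restriction of a Coxeter matrix to a set of indices
(corresponding to an induced subgraph of the Coxeter graph). -/
def CoxeterMatrix.restrict {V : Type*} (M : CoxeterMatrix V) (S : Set V) : CoxeterMatrix S where
  M a b := M a b
  isSymm := Matrix.IsSymm.ext fun a b => M.isSymm.apply a b
  diagonal a := M.diagonal a
  off_diagonal a b h := M.off_diagonal a b (fun hc => h (Subtype.ext hc))

/-- `M` is the Coxeter matrix associated to the simplicial graph `Γ` with edge labeling
`ψ : E → {2,3,4,...}` (recorded by the values of `M` on adjacent pairs): non-adjacent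
distinct vertices get the label `0` (that is, `∞`: no relation). -/
def CoxeterMatrix.IsMatrixOf {V : Type*} (M : CoxeterMatrix V) (Γ : SimpleGraph V) : Prop :=
  (∀ v w, Γ.Adj v w → 2 ≤ M v w) ∧ (∀ v w, v ≠ w → ¬Γ.Adj v w → M v w = 0)

/-!
Let `P` be an amalgam of coherent groups over a slender group `C`, and let `f : F → P` be a
homomorphism from a finitely generated group, so that `F` acts on the Bass–Serre tree of `P`.
Finitely many edges and finitely many elements of `F` suffice to connect a base edge to its
translates by generators of `F`. They determine finitely generated subgroups of finitely many vertex
stabilizers, and by coherence the normal closure `N` of some finite set contains the intersections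
of these subgroups with `ker f`. The edge stabilizers being finitely generated, enough elements of
`F` can be chosen for the graph that these data define over `F ⧸ N` to be locally injective over the
tree. Hence it embeds in the tree and `ker f = N`. For `F` free this shows that the finitely
generated subgroups of `P` are finitely presented.

The two neighbours of a vertex `v` of a cycle of length at least four are not adjacent, so the
Coxeter group of the cycle is the amalgam of the one spanned by `v` and its neighbours with the one
spanned by the vertices other than `v`, over an infinite dihedral group, which is slender. Both
factors belong to paths, and the Coxeter group of a forest is built from finite groups by
amalgamation over groups of order at most two. The geometric representation shows that the dihedral
group is infinite, so that it embeds in both factors.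
-/

section FinitePresentation

variable {G H : Type*} [Group G] [Group H]

lemma finitelyPresented_iff_isFinitelyPresented :
    Group.FinitelyPresented G ↔ Group.IsFinitelyPresented G := by
  constructor
  · rintro ⟨n, rels, hrels, ⟨e⟩⟩
    have := hrels.to_subtype
    exact .equiv e
  · intro h
    obtain ⟨n, rels, hrels, ⟨e⟩⟩ := h.exists_mulEquiv_presentedGroup
    exact ⟨n, rels, hrels, ⟨e.symm⟩⟩

lemma slender_of_finite [Finite G] : Group.Slender G := fun K =>
  (Group.fg_iff_subgroup_fg K).1 inferInstance

lemma coherent_of_finite [Finite G] : Group.Coherent G := fun _ _ =>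
  finitelyPresented_iff_isFinitelyPresented.2 inferInstance

lemma fg_map (f : G →* H) {K : Subgroup G} (hK : K.FG) : (K.map f).FG := by
  have := (Group.fg_iff_subgroup_fg K).2 hK
  exact (Group.fg_iff_subgroup_fg _).1 (Group.fg_of_surjective (f.subgroupMap_surjective K))

lemma isFinitelyPresented_of_coherent [hG : Group.FG G] (h : Group.Coherent G) :
    Group.IsFinitelyPresented G :=
  have := finitelyPresented_iff_isFinitelyPresented.1 (h ⊤ (Group.fg_def.1 hG))
  .equiv Subgroup.topEquiv

lemma coherent_of_injective {f : G →* H} (hf : Function.Injective f) (hH : Group.Coherent H) :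
    Group.Coherent G := by
  intro K hK
  have := finitelyPresented_iff_isFinitelyPresented.1 (hH _ (fg_map f hK))
  exact finitelyPresented_iff_isFinitelyPresented.2 (.equiv (K.equivMapOfInjective f hf).symm)

lemma ker_isFinitelyNormallyGenerated [Group.FG G] [Group.IsFinitelyPresented H] {f : G →* H}
    (hf : Function.Surjective f) : f.ker.IsFinitelyNormallyGenerated := by
  obtain ⟨n, ψ, hψ, R, hR, hRψ⟩ := Group.IsFinitelyPresented.out (G := H)
  obtain ⟨S, hS⟩ := Group.fg_def.1 ‹Group.FG G›
  choose w hw using fun g => hψ (f g)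
  choose l hl using fun i => hf (ψ (.of i))
  set L : FreeGroup (Fin n) →* G := FreeGroup.lift l
  have hfL : ∀ x, f (L x) = ψ x := DFunLike.congr_fun
    (show f.comp L = ψ from FreeGroup.ext_hom _ _ fun i => by simp [L, hl])
  let N := Subgroup.normalClosure (L '' R ∪ (fun g => (L (w g))⁻¹ * g) '' S)
  have hNf : N ≤ f.ker := by
    refine Subgroup.normalClosure_le_normal (Set.union_subset ?_ ?_)
    · rintro _ ⟨x, hx, rfl⟩
      have : x ∈ ψ.ker := hRψ ▸ Subgroup.subset_normalClosure hx
      simpa [hfL] using this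
    · rintro _ ⟨g, -, rfl⟩
      simp [hfL, hw]
  have hLN : ψ.ker ≤ N.comap L := hRψ ▸ Subgroup.normalClosure_le_normal fun x hx =>
    Subgroup.subset_normalClosure (.inl ⟨x, hx, rfl⟩)
  have hgen : L.range ⊔ N = ⊤ := top_le_iff.1 <| hS ▸ (Subgroup.closure_le _).2 fun g hg =>
    (mul_inv_cancel_left (L (w g)) g) ▸ Subgroup.mul_mem_sup ⟨w g, rfl⟩
      (Subgroup.subset_normalClosure (.inr ⟨g, hg, rfl⟩))
  refine ⟨_, (hR.image _).union (S.finite_toSet.image _), hNf.antisymm fun g hg => ?_⟩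
  obtain ⟨_, ⟨x, rfl⟩, y, hy, rfl⟩ := Subgroup.mem_sup_of_normal_right.1 (hgen ▸ Subgroup.mem_top g)
  have hx : x ∈ ψ.ker := by
    simpa [hfL, MonoidHom.mem_ker.1 (hNf hy)] using hg
  exact mul_mem (hLN hx) hy

lemma exists_finite_inf_ker_le_normalClosure (f : G →* H) {K : Subgroup G} (hK : K.FG)
    (hfK : Group.IsFinitelyPresented (K.map f)) :
    ∃ R : Set G, R.Finite ∧ R ⊆ f.ker ∧ K ⊓ f.ker ≤ Subgroup.normalClosure R := by
  have := (Group.fg_iff_subgroup_fg K).2 hK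
  obtain ⟨S, hS, hSker⟩ := ker_isFinitelyNormallyGenerated (f.subgroupMap_surjective K)
  have hker : ∀ x : K, x ∈ (f.subgroupMap K).ker ↔ f x = 1 := fun x => Subtype.ext_iff
  refine ⟨K.subtype '' S, hS.image _, ?_, ?_⟩
  · rintro _ ⟨x, hx, rfl⟩
    exact (hker x).1 (hSker ▸ Subgroup.subset_normalClosure hx)
  · rintro x ⟨hxK, hx⟩
    have hle : (f.subgroupMap K).ker ≤ (Subgroup.normalClosure (K.subtype '' S)).comap K.subtype :=
      hSker ▸ Subgroup.normalClosure_le_normal fun y hy =>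
        Subgroup.subset_normalClosure ⟨y, hy, rfl⟩
    exact hle ((hker ⟨x, hxK⟩).2 hx)

lemma exists_finite_comap_le_closure_sup_ker (f : G →* H) {C : Subgroup H}
    (hC : ∀ K ≤ C, K.FG) :
    ∃ T : Set G, T.Finite ∧ T ⊆ C.comap f ∧ C.comap f ≤ Subgroup.closure T ⊔ f.ker := by
  obtain ⟨S, hS⟩ := hC _ (Subgroup.map_comap_le f C)
  have hSC : (S : Set H) ⊆ f '' (C.comap f) := by
    rw [← Subgroup.coe_map, ← hS]
    exact Subgroup.subset_closure
  classical
  obtain ⟨T, hTC, rfl⟩ := Finset.subset_set_image_iff.1 hSC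
  refine ⟨T, T.finite_toSet, hTC, ?_⟩
  rw [← Subgroup.comap_map_eq, MonoidHom.map_closure, ← Finset.coe_image, hS]
  exact Subgroup.le_comap_map f _

lemma slender_of_ker (f : G →* H) (hf : ∀ K ≤ f.ker, K.FG) (hH : Group.Slender H) :
    Group.Slender G := by
  intro K
  obtain ⟨T, hT, -, hKT⟩ :=
    exists_finite_comap_le_closure_sup_ker (f.comp K.subtype) (C := ⊤) fun L _ => hH L
  have hker : (Subgroup.map K.subtype (f.comp K.subtype).ker).FG :=
    hf _ (Subgroup.map_le_iff_le_comap.2 fun _ hx => hx)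
  have hTfg : (Subgroup.map K.subtype (Subgroup.closure T)).FG := fg_map _ ⟨hT.toFinset, by simp⟩
  have hK := congrArg (Subgroup.map K.subtype) (top_le_iff.1 hKT)
  rw [Subgroup.map_sup, ← MonoidHom.range_eq_map, K.range_subtype] at hK
  exact hK ▸ hTfg.sup hker

lemma fg_of_le_zpowers {g : G} {K : Subgroup G} (hK : K ≤ Subgroup.zpowers g) : K.FG := by
  have : IsCyclic K := (Subgroup.subgroupOfEquivOfLe hK).isCyclic.1 inferInstance
  obtain ⟨x, rfl⟩ := K.isCyclic_iff_exists_zpowers_eq_top.1 this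
  exact ⟨{x}, by rw [Finset.coe_singleton, Subgroup.zpowers_eq_closure]⟩

end FinitePresentation

section Tree

open Monoid

variable {ι : Type*} {G : ι → Type*} {H : Type*} [∀ i, Group (G i)] [Group H]
  {φ : ∀ i, H →* G i} {Y : Type*} {p : Y → PushoutI φ} {r : ι → Setoid Y} {o : Option ι}
  {y₀ y y' : Y}

/-- Reduced paths to `y₀` in the graph whose edges of type `i` are the pairs related by `r i` and
whose points are labelled by elements `p y` of the amalgam. Consecutive edges have different types,
and the endpoints of an edge are not congruent modulo the amalgamated subgroup. The index `o` is the
type of the first edge. -/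
inductive ReducedPath (p : Y → PushoutI φ) (r : ι → Setoid Y) (y₀ : Y) : Option ι → Y → Prop
  | nil {y : Y} (hr : ∀ i, r i y y₀) (hp : (p y)⁻¹ * p y₀ ∈ (PushoutI.base φ).range) :
      ReducedPath p r y₀ none y
  | cons {o : Option ι} {y y' : Y} {i : ι} (h : ReducedPath p r y₀ o y) (ho : o ≠ some i)
      (hr : r i y' y) (hp : (p y')⁻¹ * p y ∉ (PushoutI.base φ).range) :
      ReducedPath p r y₀ (some i) y'

namespace ReducedPath

lemma change_start (h : ReducedPath p r y₀ o y) (hr : ∀ i, r i y' y)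
    (hp : (p y')⁻¹ * p y ∈ (PushoutI.base φ).range) : ReducedPath p r y₀ o y' := by
  cases h with
  | nil hr₀ hp₀ =>
    refine .nil (fun i => (r i).trans (hr i) (hr₀ i)) ?_
    simpa [mul_assoc] using mul_mem hp hp₀
  | @cons _ z _ i h ho hi hpi =>
    refine .cons h ho ((r i).trans (hr i) hi) fun hmem => hpi ?_
    simpa [mul_assoc] using mul_mem (inv_mem hp) hmem

/-- A new edge is appended, merged with a first edge of the same type, or absorbed. -/
lemma exists_of_rel
    (hloc : ∀ i y y', r i y y' → (p y)⁻¹ * p y' ∈ (PushoutI.base φ).range → ∀ j, r j y y')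
    (h : ReducedPath p r y₀ o y) {i : ι} (hi : r i y' y) : ∃ o, ReducedPath p r y₀ o y' := by
  by_cases hp : (p y')⁻¹ * p y ∈ (PushoutI.base φ).range
  · exact ⟨o, h.change_start (hloc i _ _ hi hp) hp⟩
  by_cases ho : o = some i
  · subst ho
    obtain _ | @⟨_, z, _, _, h, ho, hz, -⟩ := h
    have hi' := (r i).trans hi hz
    by_cases hp' : (p y')⁻¹ * p z ∈ (PushoutI.base φ).range
    · exact ⟨_, h.change_start (hloc i _ _ hi' hp') hp'⟩
    · exact ⟨_, .cons h ho hi' hp'⟩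
  · exact ⟨_, .cons h ho hi hp⟩

lemma exists_of_iSup_rel
    (hloc : ∀ i y y', r i y y' → (p y)⁻¹ * p y' ∈ (PushoutI.base φ).range → ∀ j, r j y y')
    (h : (⨆ i, r i) y y₀) : ∃ o, ReducedPath p r y₀ o y := by
  have hle : ⨆ i, r i ≤ Setoid.ker fun y => ∃ o, ReducedPath p r y₀ o y := by
    refine iSup_le fun i y y' hi => propext ⟨?_, ?_⟩
    · rintro ⟨_, h⟩
      exact h.exists_of_rel hloc ((r i).symm hi)
    · rintro ⟨_, h⟩
      exact h.exists_of_rel hloc hi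
  exact (hle h).mpr ⟨none, .nil (fun i => (r i).refl y₀) (by simp)⟩

lemma exists_reduced_word (hof : ∀ i y y', r i y y' → (p y)⁻¹ * p y' ∈ (PushoutI.of i).range)
    (h : ReducedPath p r y₀ o y) :
    ∃ w : CoprodI.Word G, PushoutI.Reduced φ w ∧ w.fstIdx = o ∧
      ∃ b, (p y)⁻¹ * p y₀ = PushoutI.ofCoprodI w.prod * PushoutI.base φ b := by
  induction h with
  | nil _ hp =>
    obtain ⟨b, hb⟩ := hp
    exact ⟨.empty, by simp [PushoutI.Reduced], rfl, b, by simp [hb]⟩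
  | @cons o y y' i _ ho hr hp ih =>
    obtain ⟨w, hw, rfl, b, hb⟩ := ih
    obtain ⟨x, hx⟩ := hof i _ _ hr
    have hxφ : x ∉ (φ i).range := by
      rintro ⟨z, rfl⟩
      exact hp ⟨z, by rw [← hx, PushoutI.of_apply_eq_base]⟩
    refine ⟨.cons x w ho fun h => hxφ (h ▸ one_mem _), ?_, by simp, b, ?_⟩
    · simpa [PushoutI.Reduced, -MonoidHom.mem_range] using ⟨hxφ, hw⟩
    · rw [CoprodI.Word.prod_cons, map_mul, PushoutI.ofCoprodI_of, hx, mul_assoc, ← hb]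
      group

end ReducedPath

/-- The graph is locally injective over the Bass–Serre tree of the amalgam, hence embedded in it. -/
lemma rel_of_iSup_rel_of_mem_range_base (hφ : ∀ i, Function.Injective (φ i))
    (hof : ∀ i y y', r i y y' → (p y)⁻¹ * p y' ∈ (PushoutI.of i).range)
    (hloc : ∀ i y y', r i y y' → (p y)⁻¹ * p y' ∈ (PushoutI.base φ).range → ∀ j, r j y y')
    (hy : (⨆ i, r i) y y₀) (hp : (p y)⁻¹ * p y₀ ∈ (PushoutI.base φ).range) (i : ι) :
    r i y y₀ := by
  obtain ⟨o, h⟩ := ReducedPath.exists_of_iSup_rel hloc hy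
  obtain ⟨w, hw, rfl, b, hb⟩ := h.exists_reduced_word hof
  have hwbase : PushoutI.ofCoprodI w.prod ∈ (PushoutI.base φ).range := by
    simpa [hb] using mul_mem hp (inv_mem (⟨b, rfl⟩ : PushoutI.base φ b ∈ (PushoutI.base φ).range))
  obtain rfl := hw.eq_empty_of_mem_range hφ hwbase
  cases h with
  | nil hr _ => exact hr i

end Tree

section CosetStabilizer

variable {F P : Type*} [Group F] [Group P] {f : F →* P} {S : Subgroup P} {c : P} {u : F}

/-- The stabilizer of the coset `c S` for the action of `F` on `P ⧸ S` through `f`. -/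
def cosetStabilizer (f : F →* P) (S : Subgroup P) (c : P) : Subgroup F :=
  S.comap ((MulAut.conj c⁻¹).toMonoidHom.comp f)

lemma mem_cosetStabilizer : u ∈ cosetStabilizer f S c ↔ c⁻¹ * f u * c ∈ S := by
  simp [cosetStabilizer]

lemma ker_conj_comp : ((MulAut.conj c⁻¹).toMonoidHom.comp f).ker = f.ker :=
  Subgroup.ext fun _ => map_eq_one_iff (MulAut.conj c⁻¹) (MulEquiv.injective _)

lemma ker_le_cosetStabilizer : f.ker ≤ cosetStabilizer f S c := by
  rw [← ker_conj_comp (c := c)]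
  exact MonoidHom.ker_le_comap _ _

lemma exists_finite_cosetStabilizer_le (f : F →* P) (hS : ∀ K ≤ S, K.FG) {J : Set P}
    (hJ : J.Finite) : ∃ E : Set F, E.Finite ∧ ∀ c ∈ J,
      cosetStabilizer f S c ≤ Subgroup.closure (E ∩ cosetStabilizer f S c) ⊔ f.ker := by
  choose T hT hTS hle using fun c =>
    exists_finite_comap_le_closure_sup_ker ((MulAut.conj c⁻¹).toMonoidHom.comp f) hS
  refine ⟨⋃ c ∈ J, T c, hJ.biUnion fun c _ => hT c, fun c hc => ?_⟩
  refine (hle c).trans (sup_le_sup (Subgroup.closure_mono ?_) ker_conj_comp.le)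
  exact Set.subset_inter (Set.subset_biUnion_of_mem (u := T) hc) (hTS c)

/-- Stabilizers of cosets of `S` map into conjugates of `S`. -/
lemma isFinitelyPresented_map_of_le_cosetStabilizer (hS : Group.Coherent S) {K : Subgroup F}
    (hK : K.FG) (hKS : K ≤ cosetStabilizer f S c) : Group.IsFinitelyPresented (K.map f) := by
  have hmap : ∀ x : K.map f, MulAut.conj c⁻¹ (x : P) ∈ S := by
    rintro ⟨_, u, hu, rfl⟩
    exact hKS hu
  have hinj : Function.Injective
      (((MulAut.conj c⁻¹).toMonoidHom.comp (K.map f).subtype).codRestrict S hmap) :=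
    fun x y h => Subtype.ext ((MulAut.conj c⁻¹).injective (congrArg Subtype.val h))
  have := (Group.fg_iff_subgroup_fg _).2 (fg_map f hK)
  exact isFinitelyPresented_of_coherent (coherent_of_injective hinj hS)

end CosetStabilizer

/-- Representatives `rep g` for the double cosets of `f.range` and `S` in `P`, together with
elements `lift g` of `F` that move `rep g` into the coset `g S`. -/
structure OrbitTransversal {F P : Type*} [Group F] [Group P] (f : F →* P) (S : Subgroup P) where
  rep : P → P
  lift : P → F
  inv_mul_mem : ∀ g, (f (lift g) * rep g)⁻¹ * g ∈ S
  rep_mul_mul : ∀ w g, ∀ s ∈ S, rep (f w * g * s) = rep g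

namespace OrbitTransversal

variable {F P : Type*} [Group F] [Group P] {f : F →* P} {S : Subgroup P}

instance : Nonempty (OrbitTransversal f S) := by
  let rep (g : P) : P := (DoubleCoset.mk f.range S g).out
  have exists_lift (g : P) : ∃ w, (f w * rep g)⁻¹ * g ∈ S := by
    obtain ⟨_, s, ⟨w, rfl⟩, hs, h⟩ := DoubleCoset.mk_out_eq_mul f.range S g
    refine ⟨w⁻¹, ?_⟩
    simpa [rep, h, mul_assoc] using hs
  choose lift hlift using exists_lift
  refine ⟨rep, lift, hlift, fun w g s hs => congrArg Quotient.out ?_⟩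
  exact (DoubleCoset.eq _ _ _ _).2 ⟨f w⁻¹, ⟨_, rfl⟩, s⁻¹, inv_mem hs, by simp [mul_assoc]⟩

variable (T : OrbitTransversal f S)

lemma rep_eq_rep {w w' : F} {g g' : P} (h : (f w * g)⁻¹ * (f w' * g') ∈ S) :
    T.rep g = T.rep g' := by
  rw [← T.rep_mul_mul (w'⁻¹ * w) g _ h]
  simp [mul_assoc]

lemma rep_rep (g : P) : T.rep (T.rep g) = T.rep g :=
  T.rep_eq_rep (w := T.lift g) (w' := 1) (by simpa using T.inv_mul_mem g)

/-- The finitely generated subgroup of `F` produced by the moves `c ⟶ f s * c'` along `S` with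
`c, c' ∈ J` and `rep c = a`. It acts on the vertex `a S` of the Bass–Serre tree. -/
def vertexGroup (J : Set P) (E : Set F) (a : P) : Subgroup F :=
  Subgroup.closure {u | ∃ c ∈ J, ∃ c' ∈ J, ∃ s ∈ E,
    c⁻¹ * f s * c' ∈ S ∧ T.rep c = a ∧ (T.lift c)⁻¹ * s * T.lift c' = u}

variable {J : Set P} {E : Set F} {a : P}

lemma vertexGroup_fg (hJ : J.Finite) (hE : E.Finite) : (T.vertexGroup J E a).FG := by
  refine (Subgroup.fg_iff _).2 ⟨_, rfl, ?_⟩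
  refine ((hJ.prod (hE.prod hJ)).image
    fun x => (T.lift x.1)⁻¹ * x.2.1 * T.lift x.2.2).subset ?_
  rintro u ⟨c, hc, c', hc', s, hs, -, -, rfl⟩
  exact ⟨(c, s, c'), ⟨hc, hs, hc'⟩, rfl⟩

lemma vertexGroup_le_cosetStabilizer : T.vertexGroup J E a ≤ cosetStabilizer f S a := by
  refine (Subgroup.closure_le _).2 ?_
  rintro _ ⟨c, -, c', -, s, -, hs, rfl, rfl⟩
  have hrep : T.rep c = T.rep c' := T.rep_eq_rep (w := 1) (w' := s) (by simpa [mul_assoc] using hs)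
  have h := mul_mem (mul_mem (T.inv_mul_mem c) hs) (inv_mem (T.inv_mul_mem c'))
  rw [← hrep] at h
  refine mem_cosetStabilizer.2 ?_
  simpa [mul_assoc] using h

lemma conj_lift_mem_vertexGroup {C : Subgroup P} (hCS : C ≤ S) {c : P} (hc : c ∈ J) {t : F}
    (ht : t ∈ Subgroup.closure (E ∩ cosetStabilizer f C c)) :
    (T.lift c)⁻¹ * t * T.lift c ∈ T.vertexGroup J E (T.rep c) := by
  suffices h : Subgroup.closure (E ∩ cosetStabilizer f C c) ≤
      cosetStabilizer (.id F) (T.vertexGroup J E (T.rep c)) (T.lift c) from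
    mem_cosetStabilizer.1 (h ht)
  refine (Subgroup.closure_le _).2 fun s hs => mem_cosetStabilizer.2 (Subgroup.subset_closure ?_)
  exact ⟨c, hc, c, hc, s, hs.1, hCS (mem_cosetStabilizer.1 hs.2), rfl, rfl⟩

/-- The points `(w, c)` and `(w', c')` of `F × J` are related when `f w * c` and `f w' * c'` lie
over the same vertex `f (w * lift c) * rep c * S` for a reason visible in the subgroups `K` of
`F`. -/
def vertexSetoid (K : P → Subgroup F) (J : Set P) : Setoid (F × J) where
  r y y' := T.rep y.2 = T.rep y'.2 ∧
    (y.1 * T.lift y.2)⁻¹ * (y'.1 * T.lift y'.2) ∈ K (T.rep y.2)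
  iseqv.refl y := ⟨rfl, by simp⟩
  iseqv.symm := fun ⟨hrep, h⟩ => ⟨hrep.symm, hrep ▸ by simpa using inv_mem h⟩
  iseqv.trans := fun ⟨hrep, h⟩ ⟨hrep', h'⟩ => by
    refine ⟨hrep.trans hrep', ?_⟩
    rw [← hrep] at h'
    simpa [mul_assoc] using mul_mem h h'

variable {K : P → Subgroup F} {y y' : F × J}

lemma inv_mul_mem_of_vertexSetoid (hK : ∀ a, K a ≤ cosetStabilizer f S a)
    (h : T.vertexSetoid K J y y') : (f y.1 * y.2)⁻¹ * (f y'.1 * y'.2) ∈ S := by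
  obtain ⟨hrep, h⟩ := h
  have h := mul_mem (mul_mem (inv_mem (T.inv_mul_mem y.2)) (mem_cosetStabilizer.1 (hK _ h)))
    (hrep ▸ T.inv_mul_mem y'.2)
  simpa [mul_assoc] using h

lemma vertexSetoid_mul_left (u : F) (h : T.vertexSetoid K J y y') :
    T.vertexSetoid K J (u * y.1, y.2) (u * y'.1, y'.2) :=
  ⟨h.1, by simpa [mul_assoc] using h.2⟩

lemma vertexSetoid_mul_right_iff {w u : F} {c : J} :
    T.vertexSetoid K J (w, c) (w * u, c) ↔ (T.lift c)⁻¹ * u * T.lift c ∈ K (T.rep c) := by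
  refine (and_iff_right rfl).trans ?_
  simp [mul_assoc]

lemma vertexSetoid_of_move (hK : ∀ a, T.vertexGroup J E a ≤ K a)
    (hs : y.1⁻¹ * y'.1 ∈ E) (h : (f y.1 * y.2)⁻¹ * (f y'.1 * y'.2) ∈ S) :
    T.vertexSetoid K J y y' := by
  refine ⟨T.rep_eq_rep h, hK _ (Subgroup.subset_closure ?_)⟩
  exact ⟨y.2, y.2.2, y'.2, y'.2.2, _, hs, by simpa [mul_assoc] using h, rfl, by simp [mul_assoc]⟩

end OrbitTransversal

section Moves

open Relation Function

variable {F P ι : Type*} [Group F] [Group P] {f : F →* P} {A : ι → Subgroup P} {C : Subgroup P}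
  {J J' : Set P} {E E' : Set F} {y z : F × P}

/-- A move along `E` between points of `F × J`, where the images `f w * c` of the two points
`(w, c)` in `P` are congruent modulo some `A i`. -/
def Move (f : F →* P) (A : ι → Subgroup P) (J : Set P) (E : Set F) (y z : F × P) : Prop :=
  y.2 ∈ J ∧ z.2 ∈ J ∧ y.1⁻¹ * z.1 ∈ E ∧ ∃ i, (f y.1 * y.2)⁻¹ * (f z.1 * z.2) ∈ A i

lemma move_mono (hJ : J ⊆ J') (hE : E ⊆ E') : Move f A J E ≤ Move f A J' E' := fun _ _ h =>
  ⟨hJ h.1, hJ h.2.1, hE h.2.2.1, h.2.2.2⟩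

lemma exists_finite_reflTransGen_move (h : ReflTransGen (Move f A J' .univ) y z) :
    ∃ (J : Set P) (E : Set F), J.Finite ∧ J ⊆ J' ∧ E.Finite ∧ ReflTransGen (Move f A J E) y z := by
  induction h with
  | refl => exact ⟨∅, ∅, Set.finite_empty, Set.empty_subset _, Set.finite_empty, .refl⟩
  | @tail z₁ z₂ _ h ih =>
    obtain ⟨J, E, hJ, hJJ', hE, hpath⟩ := ih
    refine ⟨insert z₁.2 (insert z₂.2 J), insert (z₁.1⁻¹ * z₂.1) E, (hJ.insert _).insert _, ?_,
      hE.insert _, .tail (.mono (move_mono ?_ ?_) _ _ hpath) ⟨?_, ?_, ?_, h.2.2.2⟩⟩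
    · exact Set.insert_subset h.1 (Set.insert_subset h.2.1 hJJ')
    · exact (Set.subset_insert _ _).trans (Set.subset_insert _ _)
    · exact Set.subset_insert _ _
    all_goals simp

/-- A factorization of `g` into elements of the `A i` is a path in `P`, which is followed by moves
between the representatives of its vertices. -/
lemma exists_reflTransGen_move (T : OrbitTransversal f C) (hCA : ∀ i, C ≤ A i)
    (hA : ⨆ i, A i = ⊤) (g₀ g : P) :
    ∃ w c, T.rep c = c ∧ (f w * c)⁻¹ * (T.rep g₀ * g) ∈ C ∧
      ReflTransGen (Move f A (fixedPoints T.rep) .univ) (1, T.rep g₀) (w, c) := by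
  let Reached (g : P) : Prop := ∃ w c, T.rep c = c ∧ (f w * c)⁻¹ * g ∈ C ∧
    ReflTransGen (Move f A (fixedPoints T.rep) .univ) (1, T.rep g₀) (w, c)
  have reached_mul {i} {x} (hx : x ∈ A i) {g} : Reached g → Reached (g * x) := by
    rintro ⟨w, c, hc, hwc, hpath⟩
    refine ⟨T.lift (g * x), T.rep (g * x), T.rep_rep _, T.inv_mul_mem _,
      hpath.tail ⟨hc, T.rep_rep _, trivial, i, ?_⟩⟩
    have h := mul_mem (mul_mem (hCA i hwc) hx) (inv_mem (hCA i (T.inv_mul_mem (g * x))))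
    simpa [mul_assoc] using h
  have reached_mul_all : ∀ g₁, Reached g₁ → Reached (g₁ * g) :=
    Subgroup.iSup_induction A (C := fun x => ∀ g₁, Reached g₁ → Reached (g₁ * x))
      (hA ▸ Subgroup.mem_top g) (fun i x hx g₁ => reached_mul hx) (by simp)
      fun x x' hx hx' g₁ h => mul_assoc g₁ x x' ▸ hx' _ (hx _ h)
  exact reached_mul_all _ ⟨1, T.rep g₀, T.rep_rep _, by simp, .refl⟩

lemma reflTransGen_move_rep [Nonempty ι] (T : OrbitTransversal f C) (hCA : ∀ i, C ≤ A i)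
    (hA : ⨆ i, A i = ⊤) (g₀ : P) (x : F) :
    ReflTransGen (Move f A (fixedPoints T.rep) .univ) (1, T.rep g₀) (x, T.rep g₀) := by
  obtain ⟨w, c, hc, hwc, hpath⟩ :=
    exists_reflTransGen_move T hCA hA g₀ ((T.rep g₀)⁻¹ * (f x * T.rep g₀))
  rw [mul_inv_cancel_left] at hwc
  obtain rfl : c = T.rep g₀ := by rw [← hc, T.rep_eq_rep hwc, T.rep_rep]
  exact hpath.tail ⟨T.rep_rep _, T.rep_rep _, trivial, Classical.arbitrary ι, hCA _ hwc⟩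

lemma exists_finite_forall_reflTransGen_move [Nonempty ι] (T : OrbitTransversal f C)
    (hCA : ∀ i, C ≤ A i) (hA : ⨆ i, A i = ⊤) (g₀ : P) {X : Set F} (hX : X.Finite) :
    ∃ (J : Set P) (E : Set F), J.Finite ∧ J ⊆ fixedPoints T.rep ∧ E.Finite ∧ T.rep g₀ ∈ J ∧
      ∀ x ∈ X, ReflTransGen (Move f A J E) (1, T.rep g₀) (x, T.rep g₀) := by
  choose J E hJ hJT hE hpath using fun x =>
    exists_finite_reflTransGen_move (reflTransGen_move_rep T hCA hA g₀ x)
  refine ⟨insert (T.rep g₀) (⋃ x ∈ X, J x), ⋃ x ∈ X, E x, (hX.biUnion fun x _ => hJ x).insert _,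
    Set.insert_subset (T.rep_rep g₀) (Set.iUnion₂_subset fun x _ => hJT x),
    hX.biUnion fun x _ => hE x, Set.mem_insert _ _,
    fun x hx => .mono (move_mono ?_ ?_) _ _ (hpath x)⟩
  · exact (Set.subset_biUnion_of_mem (u := J) hx).trans (Set.subset_insert _ _)
  · exact Set.subset_biUnion_of_mem (u := E) hx

end Moves

section InvariantSetoid

variable {F κ ι : Type*} [Group F]

lemma rel_of_closure_eq_top {s : Setoid (F × κ)} {X : Set F} (hX : Subgroup.closure X = ⊤)
    (hs : ∀ u y z, s y z → s (u * y.1, y.2) (u * z.1, z.2)) {c : κ}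
    (h : ∀ x ∈ X, s (1, c) (x, c)) (w : F) : s (1, c) (w, c) := by
  induction (hX ▸ Subgroup.mem_top w : w ∈ Subgroup.closure X) using Subgroup.closure_induction with
  | mem x hx => exact h x hx
  | one => exact s.refl _
  | mul x y _ _ hx hy => exact s.trans hx (by simpa using hs x _ _ hy)
  | inv x _ hx => exact s.symm (by simpa using hs x⁻¹ _ _ hx)

lemma iSup_rel_mul_left {r : ι → Setoid (F × κ)}
    (hr : ∀ i u y z, r i y z → r i (u * y.1, y.2) (u * z.1, z.2)) (u : F) {y z : F × κ}
    (h : (⨆ i, r i) y z) : (⨆ i, r i) (u * y.1, y.2) (u * z.1, z.2) := by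
  have hle : ⨆ i, r i ≤ (⨆ i, r i).comap fun y => (u * y.1, y.2) :=
    iSup_le fun i y z h => le_iSup r i (hr i u y z h)
  exact hle h

end InvariantSetoid

section FinitelyManyRelations

open Relation Function

variable {F P ι : Type*} [Group F] [Group P] {f : F →* P} {A : ι → Subgroup P} {C : Subgroup P}

lemma sup_inf_le_of_inf_le {K L N : Subgroup F} [N.Normal] (hNL : N ≤ L) (hKL : K ⊓ L ≤ N) :
    (K ⊔ N) ⊓ L ≤ N := by
  rintro _ ⟨h, hL⟩
  obtain ⟨k, hk, n, hn, rfl⟩ := Subgroup.mem_sup_of_normal_right.1 h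
  exact mul_mem (hKL ⟨hk, (mul_mem_cancel_right (hNL hn)).1 hL⟩) hn

lemma inv_mul_mul_mem_iff {N : Subgroup F} [hN : N.Normal] (g : F) {x : F} :
    g⁻¹ * x * g ∈ N ↔ x ∈ N := by
  rw [mul_assoc, hN.mem_comm_iff, mul_inv_cancel_right]

lemma exists_finite_connecting_moves [Group.FG F] [Nonempty ι] (T : OrbitTransversal f C)
    (hC : ∀ K ≤ C, K.FG) (hCA : ∀ i, C ≤ A i) (hA : ⨆ i, A i = ⊤) (g₀ : P) :
    ∃ (J : Set P) (E X : Set F), J.Finite ∧ E.Finite ∧ J ⊆ fixedPoints T.rep ∧ T.rep g₀ ∈ J ∧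
      Subgroup.closure X = ⊤ ∧
      (∀ x ∈ X, ReflTransGen (Move f A J E) (1, T.rep g₀) (x, T.rep g₀)) ∧
      ∀ c ∈ J, cosetStabilizer f C c ≤ Subgroup.closure (E ∩ cosetStabilizer f C c) ⊔ f.ker := by
  obtain ⟨X, hX⟩ := Group.fg_def.1 ‹Group.FG F›
  obtain ⟨J, E₁, hJ, hJT, hE₁, hg₀, hpath⟩ :=
    exists_finite_forall_reflTransGen_move T hCA hA g₀ X.finite_toSet
  obtain ⟨E₂, hE₂, hJE₂⟩ := exists_finite_cosetStabilizer_le f hC hJ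
  refine ⟨J, E₁ ∪ E₂, X, hJ, hE₁.union hE₂, hJT, hg₀, hX, fun x hx => ?_, fun c hc => ?_⟩
  · exact .mono (move_mono subset_rfl Set.subset_union_left) _ _ (hpath x hx)
  · refine (hJE₂ c hc).trans (sup_le_sup_right (Subgroup.closure_mono ?_) _)
    exact Set.inter_subset_inter_left _ Set.subset_union_right

lemma exists_finite_vertexGroup_inf_ker_le [Finite ι] (hA : ∀ i, Group.Coherent (A i))
    (T : ∀ i, OrbitTransversal f (A i)) {J : Set P} (hJ : J.Finite) {E : Set F} (hE : E.Finite) :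
    ∃ R : Set F, R.Finite ∧ R ⊆ f.ker ∧ ∀ i, ∀ c ∈ J,
      (T i).vertexGroup J E ((T i).rep c) ⊓ f.ker ≤ Subgroup.normalClosure R := by
  choose R hR hRf hle using fun i a => exists_finite_inf_ker_le_normalClosure f
    ((T i).vertexGroup_fg (a := a) hJ hE)
    (isFinitelyPresented_map_of_le_cosetStabilizer (hA i) ((T i).vertexGroup_fg hJ hE)
      (T i).vertexGroup_le_cosetStabilizer)
  refine ⟨⋃ i, ⋃ c ∈ J, R i ((T i).rep c), Set.finite_iUnion fun i => hJ.biUnion fun c _ => hR i _,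
    Set.iUnion_subset fun i => Set.iUnion₂_subset fun c _ => hRf i _, fun i c hc => ?_⟩
  refine (hle i _).trans (Subgroup.normalClosure_mono ?_)
  exact Set.subset_iUnion_of_subset i
    (Set.subset_biUnion_of_mem (u := fun c => R i ((T i).rep c)) hc)

variable {J : Set P} {E : Set F} {N : Subgroup F} [N.Normal]

lemma mem_of_vertexSetoid_mul_right {S : Subgroup P} (T : OrbitTransversal f S) {c : J}
    (hNf : N ≤ f.ker) (hN : T.vertexGroup J E (T.rep c) ⊓ f.ker ≤ N) {w u : F} (hu : u ∈ f.ker)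
    (h : T.vertexSetoid (fun a => T.vertexGroup J E a ⊔ N) J (w, c) (w * u, c)) : u ∈ N := by
  rw [T.vertexSetoid_mul_right_iff] at h
  exact (inv_mul_mul_mem_iff _).1 (sup_inf_le_of_inf_le hNf hN ⟨h, (inv_mul_mul_mem_iff _).2 hu⟩)

lemma vertexSetoid_of_mem_edge (T₀ : OrbitTransversal f C) (T : ∀ i, OrbitTransversal f (A i))
    (hCA : ∀ i, C ≤ A i) (hJ : J ⊆ fixedPoints T₀.rep)
    (hE : ∀ c ∈ J, cosetStabilizer f C c ≤ Subgroup.closure (E ∩ cosetStabilizer f C c) ⊔ f.ker)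
    (hNf : N ≤ f.ker)
    (hN : ∀ i, ∀ c ∈ J, (T i).vertexGroup J E ((T i).rep c) ⊓ f.ker ≤ N) {i : ι} {y z : F × J}
    (h : (T i).vertexSetoid (fun a => (T i).vertexGroup J E a ⊔ N) J y z)
    (hC : (f y.1 * y.2)⁻¹ * (f z.1 * z.2) ∈ C) (j : ι) :
    (T j).vertexSetoid (fun a => (T j).vertexGroup J E a ⊔ N) J y z := by
  obtain ⟨w, c⟩ := y
  obtain ⟨w', c'⟩ := z
  obtain rfl : c = c' := Subtype.ext (by rw [← hJ c.2, ← hJ c'.2, T₀.rep_eq_rep hC])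
  have hstab : w⁻¹ * w' ∈ cosetStabilizer f C c :=
    mem_cosetStabilizer.2 (by simpa [mul_assoc] using hC)
  obtain ⟨t, ht, u, hu, htu⟩ := Subgroup.mem_sup_of_normal_right.1 (hE c c.2 hstab)
  obtain rfl : w' = w * t * u := by rw [mul_assoc, htu, mul_inv_cancel_left]
  have ht' (i) : (T i).vertexSetoid (fun a => (T i).vertexGroup J E a ⊔ N) J (w, c) (w * t, c) :=
    (T i).vertexSetoid_mul_right_iff.2
      (Subgroup.mem_sup_left ((T i).conj_lift_mem_vertexGroup (hCA i) c.2 ht))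
  have hu' : u ∈ N := mem_of_vertexSetoid_mul_right (T i) hNf (hN i c c.2) hu
    (((T i).vertexSetoid _ J).trans (((T i).vertexSetoid _ J).symm (ht' i)) h)
  exact ((T j).vertexSetoid _ J).trans (ht' j) ((T j).vertexSetoid_mul_right_iff.2
    (Subgroup.mem_sup_right ((inv_mul_mul_mem_iff _).2 hu')))

lemma exists_rel_of_reflTransGen_move {s : Setoid (F × J)}
    (hs : ∀ y z : F × J, Move f A J E (y.1, y.2) (z.1, z.2) → s y z) {y : F × J} {z : F × P}
    (h : ReflTransGen (Move f A J E) (y.1, y.2) z) : ∃ hz : z.2 ∈ J, s y (z.1, ⟨z.2, hz⟩) := by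
  induction h with
  | refl => exact ⟨y.2.2, s.refl y⟩
  | tail _ hmove ih =>
    obtain ⟨_, h⟩ := ih
    exact ⟨hmove.2.1, s.trans h (hs _ _ hmove)⟩

lemma iSup_vertexSetoid_of_closure_eq_top (T : ∀ i, OrbitTransversal f (A i))
    {K : ι → P → Subgroup F} (hK : ∀ i a, (T i).vertexGroup J E a ≤ K i a) {c : J} {X : Set F}
    (hX : Subgroup.closure X = ⊤)
    (hpath : ∀ x ∈ X, ReflTransGen (Move f A J E) (1, (c : P)) (x, (c : P))) (w : F) :
    (⨆ i, (T i).vertexSetoid (K i) J) (1, c) (w, c) := by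
  refine rel_of_closure_eq_top hX (fun u y z => iSup_rel_mul_left
    (fun i u y z => (T i).vertexSetoid_mul_left u) u) (fun x hx => ?_) w
  refine (exists_rel_of_reflTransGen_move ?_ (y := (1, c)) (hpath x hx)).2
  rintro y z ⟨-, -, hyz, i, hi⟩
  exact le_iSup (fun i => (T i).vertexSetoid (K i) J) i ((T i).vertexSetoid_of_move (hK i) hyz hi)

end FinitelyManyRelations

section Pushout

open Monoid Function

variable {ι : Type*} {G : ι → Type*} {H : Type*} [∀ i, Group (G i)] [Group H]
  {φ : ∀ i, H →* G i}

lemma base_range_le_of_range (i : ι) :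
    (PushoutI.base φ).range ≤ (PushoutI.of (φ := φ) i).range := by
  rintro _ ⟨h, rfl⟩
  exact ⟨φ i h, PushoutI.of_apply_eq_base φ i h⟩

lemma iSup_of_range [Nonempty ι] : ⨆ i, (PushoutI.of (φ := φ) i).range = ⊤ := by
  have hof (i) : (PushoutI.of (φ := φ) i).range ≤ ⨆ i, (PushoutI.of (φ := φ) i).range :=
    le_iSup (fun i => (PushoutI.of (φ := φ) i).range) i
  refine eq_top_iff.2 fun g _ => ?_
  induction g using PushoutI.induction_on with
  | of i g => exact hof i ⟨g, rfl⟩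
  | base h => exact hof _ (base_range_le_of_range (Classical.arbitrary ι) ⟨h, rfl⟩)
  | mul x y hx hy => exact mul_mem (hx trivial) (hy trivial)

lemma coherent_range {K : Type*} [Group K] {f : H →* K} (hf : Injective f)
    (hH : Group.Coherent H) : Group.Coherent f.range :=
  coherent_of_injective (f := (MonoidHom.ofInjective hf).symm.toMonoidHom)
    (MulEquiv.injective _) hH

lemma fg_of_le_range {K : Type*} [Group K] (f : H →* K) (hH : Group.Slender H) {L : Subgroup K}
    (hL : L ≤ f.range) : L.FG :=
  Subgroup.map_comap_eq_self hL ▸ fg_map f (hH _)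

theorem ker_isFinitelyNormallyGenerated_of_pushoutI [Finite ι] [Nonempty ι]
    (hφ : ∀ i, Injective (φ i)) (hG : ∀ i, Group.Coherent (G i)) (hH : Group.Slender H)
    {F : Type*} [Group F] [hF : Group.FG F] (f : F →* PushoutI φ) :
    f.ker.IsFinitelyNormallyGenerated := by
  obtain ⟨T₀⟩ : Nonempty (OrbitTransversal f (PushoutI.base φ).range) := inferInstance
  have T (i) : OrbitTransversal f (PushoutI.of (φ := φ) i).range := Classical.arbitrary _
  have hC (K) (hK : K ≤ (PushoutI.base φ).range) : K.FG := fg_of_le_range _ hH hK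
  have hA (i) : Group.Coherent (PushoutI.of (φ := φ) i).range :=
    coherent_range (PushoutI.of_injective hφ i) (hG i)
  obtain ⟨J, E, X, hJ, hE, hJT, hc₀, hX, hpath, hJE⟩ :=
    exists_finite_connecting_moves T₀ hC base_range_le_of_range iSup_of_range 1
  obtain ⟨R, hR, hRf, hRV⟩ := exists_finite_vertexGroup_inf_ker_le hA T hJ hE
  have hNf : Subgroup.normalClosure R ≤ f.ker := Subgroup.normalClosure_le_normal hRf
  let r (i) := (T i).vertexSetoid (fun a => (T i).vertexGroup J E a ⊔ .normalClosure R) J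
  have hof (i) (y z) (h : r i y z) := (T i).inv_mul_mem_of_vertexSetoid
    (fun _ => sup_le (T i).vertexGroup_le_cosetStabilizer (hNf.trans ker_le_cosetStabilizer)) h
  have hloc (i) (y z) (h : r i y z) :=
    vertexSetoid_of_mem_edge T₀ T base_range_le_of_range hJT hJE hNf hRV h
  refine ⟨R, hR, hNf.antisymm fun w hw => ?_⟩
  have hconn := iSup_vertexSetoid_of_closure_eq_top (c := ⟨_, hc₀⟩) T
    (fun i a => le_sup_left (b := Subgroup.normalClosure R)) hX hpath w
  have hrel := rel_of_iSup_rel_of_mem_range_base hφ hof hloc hconn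
    (by simp [MonoidHom.mem_ker.1 hw, -MonoidHom.mem_range]) (Classical.arbitrary ι)
  exact mem_of_vertexSetoid_mul_right (T _) (w := 1) hNf (hRV _ _ hc₀) hw (by simpa using hrel)

theorem coherent_pushoutI [Finite ι] [Nonempty ι] (hφ : ∀ i, Injective (φ i))
    (hG : ∀ i, Group.Coherent (G i)) (hH : Group.Slender H) : Group.Coherent (PushoutI φ) := by
  intro K hK
  have hKfg := (Group.fg_iff_subgroup_fg K).2 hK
  obtain ⟨α, _, f, hf⟩ := Group.fg_iff_exists_freeGroup_hom_surjective_finite.1 hKfg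
  have hker := ker_isFinitelyNormallyGenerated_of_pushoutI hφ hG hH (K.subtype.comp f)
  rw [MonoidHom.ker_comp_of_injective f _ K.subtype_injective] at hker
  exact finitelyPresented_iff_isFinitelyPresented.2 (.of_surjective f hf hker)

end Pushout

section GeometricRepresentation

open Module Real Polynomial.Chebyshev

lemma S_eval_two_mul_cos_mul_eq_zero {θ : ℝ} {m : ℕ} (hθ : sin θ ≠ 0) (hm : m * θ = 2 * π) :
    (S ℝ ((m - 1) / 2)).eval (2 * cos θ) *
      ((S ℝ (m / 2)).eval (2 * cos θ) + (S ℝ ((m - 2) / 2)).eval (2 * cos θ)) = 0 ∧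
    (S ℝ ((m - 2) / 2)).eval (2 * cos θ) *
      ((S ℝ ((m - 1) / 2)).eval (2 * cos θ) + (S ℝ ((m - 3) / 2)).eval (2 * cos θ)) = 0 := by
  obtain ⟨k, rfl⟩ | ⟨k, rfl⟩ := m.even_or_odd
  · have hk : k * θ = π := by push_cast at hm; linarith
    have hS : (S ℝ (k - 1)).eval (2 * cos θ) = 0 := by
      refine (mul_eq_zero.1 ?_).resolve_right hθ
      rw [S_two_mul_real_cos]
      simp [hk]
    rw [show ((k + k : ℕ) - 1 : ℤ) / 2 = k - 1 by omega,
      show ((k + k : ℕ) - 2 : ℤ) / 2 = k - 1 by omega]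
    simp only [hS, zero_mul, and_self]
  · have hk : (k + 1) * θ = 2 * π - k * θ := by push_cast at hm; linarith
    have hS : (S ℝ k).eval (2 * cos θ) + (S ℝ (k - 1)).eval (2 * cos θ) = 0 := by
      refine (mul_eq_zero.1 ?_).resolve_right hθ
      rw [add_mul, S_two_mul_real_cos, S_two_mul_real_cos]
      simp [hk, sin_two_pi_sub]
    rw [show ((2 * k + 1 : ℕ) - 1 : ℤ) / 2 = k by omega,
      show ((2 * k + 1 : ℕ) : ℤ) / 2 = k by omega,
      show ((2 * k + 1 : ℕ) - 2 : ℤ) / 2 = k - 1 by omega,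
      show ((2 * k + 1 : ℕ) - 3 : ℤ) / 2 = k - 1 by omega]
    simp only [hS, mul_zero, and_self]

lemma reflection_mul_reflection_pow_eq_one {V : Type*} [AddCommGroup V] [Module ℝ V] {x y : V}
    {f g : Dual ℝ V} (hf : f x = 2) (hg : g y = 2) {m : ℕ} (hm : 2 ≤ m)
    (hfy : f y = -2 * cos (π / m)) (hgx : g x = -2 * cos (π / m)) :
    (reflection hf * reflection hg) ^ m = 1 := by
  ext z
  obtain rfl | hm := hm.eq_or_lt
  · have hcos : -2 * cos (π / (2 : ℕ)) = 0 := by rw [Nat.cast_ofNat, cos_pi_div_two, mul_zero]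
    simp only [pow_two, LinearEquiv.mul_apply, LinearEquiv.coe_one, id_eq, reflection_apply,
      map_sub, map_smul, hf, hg, hfy, hgx, hcos]
    module
  have ht : 2 * cos (2 * (π / m)) = f y * g x - 2 := by rw [hfy, hgx, cos_two_mul]; ring
  have hm₀ : (3 : ℝ) ≤ m := by exact_mod_cast hm
  have hsin : sin (2 * (π / m)) ≠ 0 := by
    refine (sin_pos_of_pos_of_lt_pi (by positivity) ?_).ne'
    rw [← mul_div_assoc, div_lt_iff₀ (by positivity)]
    nlinarith [pi_pos]
  obtain ⟨h₁, h₂⟩ := S_eval_two_mul_cos_mul_eq_zero (m := m) hsin (by field_simp)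
  rw [reflection_mul_reflection_pow_apply hf hg m z _ ht, h₁, h₂]
  simp

lemma reflection_mul_reflection_pow_apply_self_of_eq_neg_two {R V : Type*} [CommRing R]
    [AddCommGroup V] [Module R V] {x y : V} {f g : Dual R V} (hf : f x = 2) (hg : g y = 2)
    (hfy : f y = -2) (hgx : g x = -2) (n : ℕ) :
    ((reflection hf * reflection hg) ^ n) x = (2 * n + 1 : R) • x + (2 * n : R) • y := by
  have ht : (2 : R) = f y * g x - 2 := by rw [hfy, hgx]; norm_num
  rw [reflection_mul_reflection_pow_apply_self hf hg n _ ht, hgx, S_eval_two, S_eval_two]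
  push_cast
  module

/-- The coroot of `b` in the geometric representation of a Coxeter group on `B →₀ ℝ`. When
`M b a = 0`, which encodes `∞`, the convention `π / 0 = 0` yields the standard value `-2`. -/
noncomputable def geometricCoroot {B : Type*} (M : CoxeterMatrix B) (b : B) :
    Dual ℝ (B →₀ ℝ) :=
  Finsupp.linearCombination ℝ fun a => -2 * cos (π / M b a)

variable {B : Type*} (M : CoxeterMatrix B) {a b : B}

lemma geometricCoroot_single : geometricCoroot M b (.single a 1) = -2 * cos (π / M b a) := by
  simp [geometricCoroot]

lemma geometricCoroot_single_self : geometricCoroot M b (.single b 1) = 2 := by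
  simp [geometricCoroot_single]

lemma isLiftable_reflection_geometricCoroot :
    M.IsLiftable fun b => reflection (geometricCoroot_single_self M (b := b)) := by
  intro a b
  obtain rfl | hab := eq_or_ne a b
  · simp [LinearEquiv.ext_iff, involutive_reflection _ _]
  obtain h | h : M a b = 0 ∨ 2 ≤ M a b := by
    have := M.off_diagonal a b hab
    omega
  · rw [h, pow_zero]
  · exact reflection_mul_reflection_pow_eq_one _ _ h (geometricCoroot_single M)
      (M.symmetric a b ▸ geometricCoroot_single M)

lemma simple_mul_simple_pow_ne_one (h : M a b = 0) {n : ℕ} (hn : n ≠ 0) :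
    (M.simple a * M.simple b) ^ n ≠ 1 := by
  intro hpow
  have hab : a ≠ b := by rintro rfl; simp at h
  let ρ := M.toCoxeterSystem.lift ⟨_, isLiftable_reflection_geometricCoroot M⟩
  have hρ (b) : ρ (M.simple b) = reflection (geometricCoroot_single_self M (b := b)) :=
    M.toCoxeterSystem.lift_apply_simple (isLiftable_reflection_geometricCoroot M) b
  have hfixed := congrArg (fun w => ρ w (.single a 1) b) hpow
  rw [map_pow, map_mul, hρ, hρ, reflection_mul_reflection_pow_apply_self_of_eq_neg_two
    (hfy := by simp [geometricCoroot_single, h])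
    (hgx := by simp [geometricCoroot_single, M.symmetric b a, h])] at hfixed
  simp [hab, hn] at hfixed

lemma isOfFinOrder_simple_mul_simple_iff :
    IsOfFinOrder (M.simple a * M.simple b) ↔ M a b ≠ 0 := by
  rw [isOfFinOrder_iff_pow_eq_one]
  refine ⟨fun ⟨n, hn, hpow⟩ h => simple_mul_simple_pow_ne_one M h hn.ne' hpow, fun h => ?_⟩
  exact ⟨_, Nat.pos_of_ne_zero h, M.toCoxeterSystem.simple_mul_simple_pow a b⟩

end GeometricRepresentation

section CoxeterMap

variable {B B' : Type*} {M : CoxeterMatrix B} {M' : CoxeterMatrix B'} {e : B → B'}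

/-- The homomorphism of Coxeter groups induced by a map `e` of the generators. -/
def coxeterMap (e : B → B') (he : ∀ a b, M' (e a) (e b) ∣ M a b) : M.Group →* M'.Group :=
  M.toCoxeterSystem.lift ⟨fun b => M'.simple (e b), fun a b =>
    orderOf_dvd_iff_pow_eq_one.1 <| (orderOf_dvd_of_pow_eq_one <|
      M'.toCoxeterSystem.simple_mul_simple_pow (e a) (e b)).trans (he a b)⟩

lemma coxeterMap_simple (he : ∀ a b, M' (e a) (e b) ∣ M a b) (b : B) :
    coxeterMap e he (M.simple b) = M'.simple (e b) :=
  M.toCoxeterSystem.lift_apply_simple _ b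

lemma lengthParity_coxeterMap (he : ∀ a b, M' (e a) (e b) ∣ M a b) (g : M.Group) :
    M'.toCoxeterSystem.lengthParity (coxeterMap e he g) = M.toCoxeterSystem.lengthParity g := by
  suffices h : M'.toCoxeterSystem.lengthParity.comp (coxeterMap e he) =
      M.toCoxeterSystem.lengthParity from DFunLike.congr_fun h g
  refine M.toCoxeterSystem.ext_simple fun b => ?_
  rw [CoxeterSystem.lengthParity_simple, MonoidHom.comp_apply, M.toCoxeterSystem_simple,
    coxeterMap_simple]
  exact M'.toCoxeterSystem.lengthParity_simple _

/-- The homomorphism between parabolic subgroups, viewed as Coxeter groups in their own right,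
given by an inclusion of their sets of generators. -/
def parabolicInclusion (M : CoxeterMatrix B) {S T : Set B} (h : S ⊆ T) :
    (M.restrict S).Group →* (M.restrict T).Group :=
  coxeterMap (Set.inclusion h) fun _ _ => dvd_rfl

end CoxeterMap

section SmallRank

open Function CoxeterSystem

variable {B B' : Type*} {M : CoxeterMatrix B} {M' : CoxeterMatrix B'} {e : B → B'} {i j : B}

lemma ker_lengthParity_eq_bot [Subsingleton B] : M.toCoxeterSystem.lengthParity.ker = ⊥ := by
  have hcases (g : M.Group) : g = 1 ∨ ∃ b, g = M.toCoxeterSystem.simple b := by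
    induction g using M.toCoxeterSystem.simple_induction_left with
    | one => exact .inl rfl
    | mul_simple_left g b ih =>
      obtain rfl | ⟨b', rfl⟩ := ih
      · exact .inr ⟨b, mul_one _⟩
      · exact .inl (Subsingleton.elim b b' ▸ M.toCoxeterSystem.simple_mul_simple_self b)
  refine (Subgroup.eq_bot_iff_forall _).2 fun g hg => (hcases g).resolve_right ?_
  rintro ⟨b, rfl⟩
  rw [MonoidHom.mem_ker, lengthParity_simple] at hg
  exact absurd hg (by decide)

lemma finite_group_of_subsingleton [Subsingleton B] : Finite M.Group :=
  .of_injective _ ((MonoidHom.ker_eq_bot_iff _).1 (ker_lengthParity_eq_bot (M := M)))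

lemma coxeterMap_injective_of_subsingleton [Subsingleton B]
    (he : ∀ a b, M' (e a) (e b) ∣ M a b) : Injective (coxeterMap e he) := by
  refine (injective_iff_map_eq_one _).2 fun g hg => ?_
  rw [← Subgroup.mem_bot, ← ker_lengthParity_eq_bot (M := M), MonoidHom.mem_ker,
    ← lengthParity_coxeterMap he, hg, map_one]

lemma simple_mul_zpow_simple_mul_simple_mul_simple (k : ℤ) :
    M.simple i * (M.simple i * M.simple j) ^ k * M.simple i =
      (M.simple i * M.simple j) ^ (-k) := by
  have hinv (b : B) : (M.simple b)⁻¹ = M.simple b := M.toCoxeterSystem.inv_simple b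
  have hself (b : B) : M.simple b * M.simple b = 1 := M.toCoxeterSystem.simple_mul_simple_self b
  calc M.simple i * (M.simple i * M.simple j) ^ k * M.simple i
      = (M.simple i * (M.simple i * M.simple j) * (M.simple i)⁻¹) ^ k := by rw [conj_zpow, hinv]
    _ = ((M.simple i * M.simple j)⁻¹) ^ k := by
      rw [mul_inv_rev, hinv, hinv, ← mul_assoc, hself, one_mul]
    _ = (M.simple i * M.simple j) ^ (-k) := by rw [inv_zpow, zpow_neg]

lemma exists_eq_zpow_or_eq_zpow_mul_simple (hB : ∀ b, b = i ∨ b = j) (g : M.Group) :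
    ∃ k : ℤ, g = (M.simple i * M.simple j) ^ k ∨
      g = (M.simple i * M.simple j) ^ k * M.simple i := by
  have hself (b : B) : M.simple b * M.simple b = 1 := M.toCoxeterSystem.simple_mul_simple_self b
  have hi {g : M.Group} : (∃ k : ℤ, g = (M.simple i * M.simple j) ^ k ∨
      g = (M.simple i * M.simple j) ^ k * M.simple i) →
      ∃ k : ℤ, M.simple i * g = (M.simple i * M.simple j) ^ k ∨
        M.simple i * g = (M.simple i * M.simple j) ^ k * M.simple i := by
    rintro ⟨k, rfl | rfl⟩
    · refine ⟨-k, .inr ?_⟩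
      rw [← simple_mul_zpow_simple_mul_simple_mul_simple, mul_assoc, hself, mul_one]
    · exact ⟨-k, .inl (by rw [← simple_mul_zpow_simple_mul_simple_mul_simple, mul_assoc])⟩
  induction g using M.toCoxeterSystem.simple_induction_left with
  | one => exact ⟨0, .inl rfl⟩
  | mul_simple_left g b ih =>
    rw [M.toCoxeterSystem_simple]
    obtain rfl | rfl := hB b
    · exact hi ih
    · have hb : M.simple b * g = M.simple i * (M.simple i * M.simple b * g) := by
        rw [mul_assoc, ← mul_assoc, hself, one_mul]
      rw [hb]
      refine hi ?_
      obtain ⟨k, rfl | rfl⟩ := ih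
      · exact ⟨1 + k, .inl (zpow_one_add _ k).symm⟩
      · exact ⟨1 + k, .inr (by rw [zpow_one_add, mul_assoc _ _ (M.simple i)])⟩

lemma ker_lengthParity_le_zpowers (hB : ∀ b, b = i ∨ b = j) :
    M.toCoxeterSystem.lengthParity.ker ≤ Subgroup.zpowers (M.simple i * M.simple j) := by
  intro g hg
  have hparity (b : B) : M.toCoxeterSystem.lengthParity (M.simple b) = Multiplicative.ofAdd 1 :=
    M.toCoxeterSystem.lengthParity_simple b
  obtain ⟨k, rfl | rfl⟩ := exists_eq_zpow_or_eq_zpow_mul_simple hB g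
  · exact ⟨k, rfl⟩
  · have hrot : .ofAdd 1 * .ofAdd 1 = (1 : Multiplicative (ZMod 2)) := rfl
    rw [MonoidHom.mem_ker, map_mul, map_zpow, map_mul, hparity, hparity, hrot, one_zpow,
      one_mul] at hg
    exact absurd hg (by decide)

lemma finite_group_of_rank_two (hB : ∀ b, b = i ∨ b = j) (hij : M i j ≠ 0) : Finite M.Group := by
  have : Finite (Subgroup.zpowers (M.simple i * M.simple j)) :=
    ((isOfFinOrder_simple_mul_simple_iff M).2 hij).finite_zpowers
  have : Finite M.toCoxeterSystem.lengthParity.ker :=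
    .of_injective _ (Subgroup.inclusion_injective (ker_lengthParity_le_zpowers hB))
  exact (MonoidHom.finite_iff_finite_ker_range _).2 ⟨this, inferInstance⟩

lemma slender_group_of_rank_two (hB : ∀ b, b = i ∨ b = j) : Group.Slender M.Group :=
  slender_of_ker M.toCoxeterSystem.lengthParity
    (fun _ hK => fg_of_le_zpowers (hK.trans (ker_lengthParity_le_zpowers hB))) slender_of_finite

lemma coxeterMap_injective_of_rank_two (he : ∀ a b, M' (e a) (e b) ∣ M a b)
    (hB : ∀ b, b = i ∨ b = j) (hij : M' (e i) (e j) = 0) : Injective (coxeterMap e he) := by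
  refine (injective_iff_map_eq_one _).2 fun g hg => ?_
  have hker : g ∈ M.toCoxeterSystem.lengthParity.ker := by
    rw [MonoidHom.mem_ker, ← lengthParity_coxeterMap he, hg, map_one]
  obtain ⟨k, rfl⟩ := ker_lengthParity_le_zpowers hB hker
  have hord : ¬IsOfFinOrder (M'.simple (e i) * M'.simple (e j)) := by
    rw [isOfFinOrder_simple_mul_simple_iff, not_not, hij]
  have hk : k = 0 := injective_zpow_iff_not_isOfFinOrder.2 hord <| by
    simpa only [map_zpow, map_mul, coxeterMap_simple, zpow_zero] using hg
  rw [hk]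
  rfl

end SmallRank

section ParabolicDecomposition

open Function Monoid

variable {B : Type*} (M : CoxeterMatrix B)

lemma parabolicInclusion_simple {S T : Set B} (h : S ⊆ T) (b : S) :
    parabolicInclusion M h ((M.restrict S).simple b) =
      (M.restrict T).simple (Set.inclusion h b) :=
  coxeterMap_simple _ b

lemma parabolicInclusion_comp {S T U : Set B} (hST : S ⊆ T) (hTU : T ⊆ U) :
    (parabolicInclusion M hTU).comp (parabolicInclusion M hST) =
      parabolicInclusion M (hST.trans hTU) :=
  (M.restrict S).toCoxeterSystem.ext_simple fun b => by
    simp only [MonoidHom.comp_apply, CoxeterMatrix.toCoxeterSystem_simple,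
      parabolicInclusion_simple, Set.inclusion_inclusion]

variable {M} {ι : Type*} {S : ι → Set B} {S₀ T : Set B}

lemma of_simple_eq_of_simple {hS₀ : ∀ i, S₀ ⊆ S i}
    (hinter : ∀ i j, i ≠ j → S i ∩ S j ⊆ S₀) {i j : ι} {b : B} (hi : b ∈ S i) (hj : b ∈ S j) :
    PushoutI.of (φ := fun i => parabolicInclusion M (hS₀ i)) i
        ((M.restrict (S i)).simple ⟨b, hi⟩) =
      PushoutI.of j ((M.restrict (S j)).simple ⟨b, hj⟩) := by
  obtain rfl | hij := eq_or_ne i j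
  · rfl
  have hbase (k : ι) (hk : b ∈ S k) :
      PushoutI.of k ((M.restrict (S k)).simple ⟨b, hk⟩) =
        PushoutI.base (fun i => parabolicInclusion M (hS₀ i))
          ((M.restrict S₀).simple ⟨b, hinter i j hij ⟨hi, hj⟩⟩) := by
    rw [← PushoutI.of_apply_eq_base _ k, parabolicInclusion_simple]
  rw [hbase i hi, hbase j hj]

theorem exists_injective_to_pushoutI [Nonempty ι] (hST : ∀ i, S i ⊆ T) (hS₀ : ∀ i, S₀ ⊆ S i)
    (hinter : ∀ i j, i ≠ j → S i ∩ S j ⊆ S₀)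
    (hcover : ∀ a ∈ T, ∀ b ∈ T, M a b ≠ 0 → ∃ i, a ∈ S i ∧ b ∈ S i) :
    ∃ f : (M.restrict T).Group →* PushoutI (fun i => parabolicInclusion M (hS₀ i)),
      Injective f := by
  have hpiece (b : T) : ∃ i, b.1 ∈ S i :=
    (hcover b b.2 b b.2 (by simp)).imp fun _ h => h.1
  choose p hp using hpiece
  let gen (b : T) : PushoutI (fun i => parabolicInclusion M (hS₀ i)) :=
    PushoutI.of (p b) ((M.restrict (S (p b))).simple ⟨b, hp b⟩)
  have hgen (i : ι) (b : T) (hb : b.1 ∈ S i) :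
      gen b = PushoutI.of i ((M.restrict (S i)).simple ⟨b, hb⟩) :=
    of_simple_eq_of_simple hinter (hp b) hb
  have hlift : (M.restrict T).IsLiftable gen := by
    intro a b
    obtain hab | hab := eq_or_ne (M a b) 0
    · exact hab.symm ▸ pow_zero _
    obtain ⟨i, ha, hb⟩ := hcover a a.2 b b.2 hab
    rw [hgen i a ha, hgen i b hb, ← map_mul, ← map_pow]
    exact (congrArg _ ((M.restrict (S i)).toCoxeterSystem.simple_mul_simple_pow _ _)).trans
      (map_one _)
  let r : PushoutI (fun i => parabolicInclusion M (hS₀ i)) →* (M.restrict T).Group :=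
    PushoutI.lift (fun i => parabolicInclusion M (hST i))
      (parabolicInclusion M ((hS₀ _).trans (hST (Classical.arbitrary ι))))
      fun i => parabolicInclusion_comp M (hS₀ i) (hST i)
  let f := (M.restrict T).toCoxeterSystem.lift ⟨gen, hlift⟩
  have hrf : r.comp f = .id _ := (M.restrict T).toCoxeterSystem.ext_simple fun b => by
    rw [MonoidHom.comp_apply, CoxeterSystem.lift_apply_simple, PushoutI.lift_of,
      parabolicInclusion_simple]
    rfl
  exact ⟨f, LeftInverse.injective (DFunLike.congr_fun hrf)⟩

theorem coherent_restrict_union {S₁ S₂ : Set B}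
    (hM : ∀ a ∈ S₁ \ S₂, ∀ b ∈ S₂ \ S₁, M a b = 0)
    (h₁ : Injective (parabolicInclusion M (S₁.inter_subset_left (t := S₂))))
    (h₂ : Injective (parabolicInclusion M (S₁.inter_subset_right (t := S₂))))
    (hS₁ : Group.Coherent (M.restrict S₁).Group) (hS₂ : Group.Coherent (M.restrict S₂).Group)
    (hinter : Group.Slender (M.restrict (S₁ ∩ S₂)).Group) :
    Group.Coherent (M.restrict (S₁ ∪ S₂)).Group := by
  let S (i : Bool) : Set B := cond i S₁ S₂
  have hS : ∀ i, S₁ ∩ S₂ ⊆ S i :=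
    Bool.forall_bool.2 ⟨Set.inter_subset_right, Set.inter_subset_left⟩
  have hcover : ∀ a ∈ S₁ ∪ S₂, ∀ b ∈ S₁ ∪ S₂, M a b ≠ 0 → ∃ i, a ∈ S i ∧ b ∈ S i := by
    intro a ha b hb hab
    have hMab : ¬(a ∈ S₁ \ S₂ ∧ b ∈ S₂ \ S₁) := fun h => hab (hM a h.1 b h.2)
    have hMba : ¬(b ∈ S₁ \ S₂ ∧ a ∈ S₂ \ S₁) := fun h =>
      hab (M.symmetric a b ▸ hM b h.1 a h.2)
    rw [Bool.exists_bool]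
    simp only [Set.mem_union, Set.mem_sdiff, S, cond] at *
    tauto
  obtain ⟨f, hf⟩ := exists_injective_to_pushoutI (M := M) (S := S) (T := S₁ ∪ S₂)
    (Bool.forall_bool.2 ⟨Set.subset_union_right, Set.subset_union_left⟩) hS
    (by simp [Bool.forall_bool, S, Set.inter_comm]) hcover
  exact coherent_of_injective hf (coherent_pushoutI (Bool.forall_bool.2 ⟨h₂, h₁⟩)
    (Bool.forall_bool.2 ⟨hS₂, hS₁⟩) hinter)

end ParabolicDecomposition

section Forest

variable {B : Type*} {M : CoxeterMatrix B}

lemma finite_group_restrict_insert {a : B} {S : Set B} (hS : S.Subsingleton)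
    (hM : ∀ u ∈ S, M u a ≠ 0) : Finite (M.restrict (insert a S)).Group := by
  obtain rfl | ⟨u, rfl⟩ := hS.eq_empty_or_singleton
  · have : Subsingleton ↥(insert a (∅ : Set B)) := by simp
    exact finite_group_of_subsingleton
  · refine finite_group_of_rank_two (i := ⟨u, by simp⟩) (j := ⟨a, by simp⟩) ?_ (hM u rfl)
    rintro ⟨b, rfl | rfl⟩
    exacts [.inr rfl, .inl rfl]

lemma coherent_restrict_insert {a : B} {S : Set B} (ha : a ∉ S)
    (hS : {u ∈ S | M u a ≠ 0}.Subsingleton) (hcoh : Group.Coherent (M.restrict S).Group) :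
    Group.Coherent (M.restrict (insert a S)).Group := by
  let N := {u ∈ S | M u a ≠ 0}
  have hunion : S ∪ insert a N = insert a S := by
    rw [Set.union_insert, Set.union_eq_left.2 (Set.sep_subset _ _)]
  have hinter : (S ∩ insert a N).Subsingleton := by
    rwa [Set.inter_insert_of_notMem ha, Set.inter_eq_right.2 (Set.sep_subset _ _)]
  have := hinter.coe_sort
  have := finite_group_of_subsingleton (M := M.restrict (S ∩ insert a N))
  have := finite_group_restrict_insert hS fun _ hu => hu.2
  rw [← hunion]
  refine coherent_restrict_union ?_ (coxeterMap_injective_of_subsingleton _)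
    (coxeterMap_injective_of_subsingleton _) hcoh coherent_of_finite slender_of_finite
  rintro u ⟨huS, hu⟩ _ ⟨rfl | hv, hvS⟩
  · by_contra huv
    exact hu (.inr ⟨huS, huv⟩)
  · exact absurd hv.1 hvS

theorem coherent_restrict_of_subsingleton_lower [LinearOrder B] {S : Set B} (hfin : S.Finite)
    (hS : ∀ v ∈ S, {u ∈ S | u < v ∧ M u v ≠ 0}.Subsingleton) :
    Group.Coherent (M.restrict S).Group := by
  lift S to Finset B using hfin
  induction S using Finset.induction_on_max with
  | empty =>
    have : IsEmpty ↥((∅ : Finset B) : Set B) := by simp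
    have := finite_group_of_subsingleton (M := M.restrict ((∅ : Finset B) : Set B))
    exact coherent_of_finite
  | insert a s hmax ih =>
    rw [Finset.coe_insert] at hS ⊢
    refine coherent_restrict_insert (fun ha => (hmax a ha).false) ?_ (ih fun v hv => ?_)
    · exact (hS a (Set.mem_insert a s)).anti fun u hu => ⟨.inr hu.1, hmax u hu.1, hu.2⟩
    · exact (hS v (.inr hv)).anti fun u hu => ⟨.inr hu.1, hu.2⟩

end Forest

section Cycle

lemma coherent_group_of_restrict_univ {B : Type*} {M : CoxeterMatrix B}
    (h : Group.Coherent (M.restrict Set.univ).Group) : Group.Coherent M.Group :=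
  coherent_of_injective (M.reindexGroupEquiv (Equiv.Set.univ B).symm).symm.injective h

lemma cycleGraph_adj_iff_of_lt {m : ℕ} {i j : Fin (m + 4)} (hij : i < j) :
    (SimpleGraph.cycleGraph (m + 4)).Adj i j ↔ i.val + 1 = j.val ∨ i.val = 0 ∧ j.val = m + 3 := by
  have hji : (j - i).val = j - i := Fin.coe_sub_iff_le.2 hij.le
  have hij : (i - j).val = m + 4 + i - j := Fin.coe_sub_iff_lt.2 hij
  rw [SimpleGraph.cycleGraph_adj', hji, hij]
  lia

variable {m : ℕ} {M : CoxeterMatrix (Fin (m + 4))}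

lemma val_add_one_eq_or_of_ne_zero
    (hM : ∀ i j, i ≠ j → ¬(SimpleGraph.cycleGraph (m + 4)).Adj i j → M i j = 0)
    {i j : Fin (m + 4)} (hij : i < j) (h : M i j ≠ 0) :
    i.val + 1 = j.val ∨ i.val = 0 ∧ j.val = m + 3 :=
  (cycleGraph_adj_iff_of_lt hij).1 (not_imp_comm.1 (hM i j hij.ne) h)

lemma coherent_restrict_of_cycleGraph
    (hM : ∀ i j, i ≠ j → ¬(SimpleGraph.cycleGraph (m + 4)).Adj i j → M i j = 0)
    {S : Set (Fin (m + 4))} (hS : ⟨0, by lia⟩ ∉ S ∨ ⟨m + 2, by lia⟩ ∉ S) :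
    Group.Coherent (M.restrict S).Group := by
  refine coherent_restrict_of_subsingleton_lower S.toFinite fun v _ => ?_
  rintro u ⟨hu, huv, h⟩ w ⟨hw, hwv, h'⟩
  have := val_add_one_eq_or_of_ne_zero hM huv h
  have := val_add_one_eq_or_of_ne_zero hM hwv h'
  grind

theorem coherent_group_of_cycleGraph
    (hM : ∀ i j, i ≠ j → ¬(SimpleGraph.cycleGraph (m + 4)).Adj i j → M i j = 0) :
    Group.Coherent M.Group := by
  let P : Set (Fin (m + 4)) := {i | i.val ≠ 0}
  let Q : Set (Fin (m + 4)) := {i | i.val = 0 ∨ i.val = 1 ∨ i.val = m + 3}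
  have hunion : P ∪ Q = Set.univ :=
    Set.eq_univ_of_forall fun i => (em (i.val = 0)).symm.imp_right .inl
  have hzero : ∀ a ∈ P \ Q, ∀ b ∈ Q \ P, M a b = 0 := by
    intro a ⟨_, haQ⟩ b ⟨hbQ, hbP⟩
    by_contra hab
    have := val_add_one_eq_or_of_ne_zero hM (lt_of_le_of_ne (by grind) (by grind))
      (M.symmetric b a ▸ hab)
    grind
  let i : ↥(P ∩ Q) := ⟨⟨1, by lia⟩, one_ne_zero, .inr (.inl rfl)⟩
  let j : ↥(P ∩ Q) := ⟨⟨m + 3, by lia⟩, Nat.succ_ne_zero _, .inr (.inr rfl)⟩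
  have hij : M i j = 0 := by
    by_contra h
    have := val_add_one_eq_or_of_ne_zero hM (Fin.mk_lt_mk.2 (by lia)) h
    grind
  have hB : ∀ b : ↥(P ∩ Q), b = i ∨ b = j := by
    rintro ⟨b, hbP, hbQ⟩
    simp only [i, j, Subtype.ext_iff, Fin.ext_iff]
    exact hbQ.resolve_left hbP
  refine coherent_group_of_restrict_univ (hunion ▸ ?_)
  exact coherent_restrict_union hzero (coxeterMap_injective_of_rank_two _ hB hij)
    (coxeterMap_injective_of_rank_two _ hB hij)
    (coherent_restrict_of_cycleGraph hM (.inl fun h => h rfl))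
    (coherent_restrict_of_cycleGraph hM (.inr (by grind))) (slender_group_of_rank_two hB)

end Cycle

theorem coxeterGroup_coherent_of_isCycleGT3_general {V : Type*} (Γ : SimpleGraph V)
    (M : CoxeterMatrix V) (hM : ∀ v w, v ≠ w → ¬Γ.Adj v w → M v w = 0)
    (hcycle : ∃ n : ℕ, 4 ≤ n ∧ Nonempty (Γ ≃g SimpleGraph.cycleGraph n)) :
    Group.Coherent M.Group := by
  obtain ⟨n, hn, ⟨e⟩⟩ := hcycle
  obtain ⟨m, rfl⟩ := Nat.exists_eq_add_of_le' hn
  refine coherent_of_injective (M.reindexGroupEquiv e.toEquiv).symm.injective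
    (coherent_group_of_cycleGraph fun i j hij hadj => ?_)
  exact hM _ _ (e.symm.injective.ne hij) (e.symm.map_adj_iff.not.2 hadj)

/-- If the Coxeter graph `Γ` (with edge labels in `{2,3,4,...}` recorded by
the Coxeter matrix `M`) is a cycle of length greater than `3`, then the Coxeter group `C(Γ)`
is coherent. -/
theorem coxeterGroup_coherent_of_isCycleGT3
    {V : Type} [Fintype V] (Γ : SimpleGraph V) (M : CoxeterMatrix V)
    (hM : M.IsMatrixOf Γ)
    (hcycle : ∃ n : ℕ, 4 ≤ n ∧ Nonempty (Γ ≃g SimpleGraph.cycleGraph n)) :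
    Group.Coherent M.Group :=
  coxeterGroup_coherent_of_isCycleGT3_general Γ M hM.2 hcycle
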